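/- Let f : D → ℝ^k have ℓ₂-sensitivity Δ₂f. The Gaussian mechanism M(D) = f(D) + (Z₁, …, Z_k) with Z_i i.i.d. N(0, σ²) and σ > √(2 ln(1.25/δ)) · Δ₂f / ε (for ε ∈ (0,1)) is (ε, δ)-differentially private. -/

import Mathlib

open MeasureTheory ProbabilityTheory

/-!
Write `L` for the privacy loss, the log-likelihood ratio of the output law `P` on `D` to the output
law `Q` on `D'`. Bernoulli's inequality gives `e^L ≤ e^ε + e^(ε + p (L - ε)) / p` pointwise for all
`p ≥ 1`, so integrating against `Q` turns a bound on the moment `E_Q[e^(p L)]` (a Rényi divergence)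
into approximate differential privacy. For Gaussians with variance `σ²` and means at distance `s`
this moment is `exp (p (p - 1) s² / (2 σ²))`. With `c = ε σ / Δ₂f` and `p = 1 + c² / ε` the additive
error becomes `exp ((ε - c²) / 2) / (1 + c² / ε)`, which the hypothesis on `σ` makes at most `δ`.
-/

open scoped NNReal ENNReal

theorem exp_le_one_add_exp_mul_div {p : ℝ} (hp : 1 ≤ p) (x : ℝ) :
    Real.exp x ≤ 1 + Real.exp (p * x) / p := by
  have bernoulli : 1 + p * (Real.exp x - 1) ≤ Real.exp (p * x) := by
    simpa only [add_sub_cancel, ← Real.exp_mul, mul_comm x p] using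
      one_add_mul_self_le_rpow_one_add (s := Real.exp x - 1) (by linarith [Real.exp_pos x]) hp
  have : Real.exp x - 1 ≤ Real.exp (p * x) / p := by
    rw [le_div_iff₀' (by linarith)]
    linarith
  linarith

theorem exp_le_exp_add_exp_mul_exp_mul {p : ℝ} (hp : 1 ≤ p) (ε x : ℝ) :
    Real.exp x ≤ Real.exp ε + Real.exp (ε - p * ε) / p * Real.exp (p * x) := by
  calc Real.exp x = Real.exp ε * Real.exp (x - ε) := by rw [← Real.exp_add, add_sub_cancel]
    _ ≤ Real.exp ε * (1 + Real.exp (p * (x - ε)) / p) := by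
      gcongr
      exact exp_le_one_add_exp_mul_div hp _
    _ = Real.exp ε + Real.exp ε * Real.exp (p * (x - ε)) / p := by ring
    _ = Real.exp ε + Real.exp (ε - p * ε) * Real.exp (p * x) / p := by
      rw [← Real.exp_add, ← Real.exp_add]
      ring_nf
    _ = Real.exp ε + Real.exp (ε - p * ε) / p * Real.exp (p * x) := by ring

theorem withDensity_exp_apply_le {α : Type*} [MeasurableSpace α] (ν : Measure α)
    (L : α → ℝ) {p : ℝ} (hp : 1 ≤ p) (ε : ℝ) {S : Set α} (hS : MeasurableSet S) :
    ν.withDensity (fun x ↦ ENNReal.ofReal (Real.exp (L x))) S ≤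
      ENNReal.ofReal (Real.exp ε) * ν S +
        ENNReal.ofReal (Real.exp (ε - p * ε) / p) *
          ∫⁻ x, ENNReal.ofReal (Real.exp (p * L x)) ∂ν := by
  set C := Real.exp (ε - p * ε) / p
  have hC : 0 ≤ C := by positivity
  rw [withDensity_apply _ hS]
  calc ∫⁻ x in S, ENNReal.ofReal (Real.exp (L x)) ∂ν
      ≤ ∫⁻ x in S, (ENNReal.ofReal (Real.exp ε) +
          ENNReal.ofReal C * ENNReal.ofReal (Real.exp (p * L x))) ∂ν := by
        refine lintegral_mono fun x ↦ ?_
        rw [← ENNReal.ofReal_mul hC, ← ENNReal.ofReal_add (by positivity) (by positivity)]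
        exact ENNReal.ofReal_le_ofReal (exp_le_exp_add_exp_mul_exp_mul hp ε (L x))
    _ = ENNReal.ofReal (Real.exp ε) * ν S +
          ENNReal.ofReal C * ∫⁻ x in S, ENNReal.ofReal (Real.exp (p * L x)) ∂ν := by
        rw [lintegral_add_left measurable_const, setLIntegral_const,
          lintegral_const_mul' _ _ ENNReal.ofReal_ne_top]
    _ ≤ ENNReal.ofReal (Real.exp ε) * ν S +
          ENNReal.ofReal C * ∫⁻ x, ENNReal.ofReal (Real.exp (p * L x)) ∂ν := by
        gcongr
        exact Measure.restrict_le_self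

section Product

variable {ι : Type*} [Fintype ι] {α : ι → Type*}

theorem indicator_univ_pi_prod {M : Type*} [CommMonoidWithZero M] (s : ∀ i, Set (α i))
    (r : ∀ i, α i → M) (x : ∀ i, α i) :
    (Set.univ.pi s).indicator (fun x ↦ ∏ i, r i (x i)) x = ∏ i, (s i).indicator (r i) (x i) := by
  classical
  simp only [Set.indicator_apply, Set.mem_univ_pi, Finset.prod_ite_zero, Finset.mem_univ,
    true_imp_iff]

variable [∀ i, MeasurableSpace (α i)]

theorem lintegral_pi_prod (μ : ∀ i, Measure (α i)) [∀ i, IsProbabilityMeasure (μ i)]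
    {g : ∀ i, α i → ℝ≥0∞} (hg : ∀ i, Measurable (g i)) :
    ∫⁻ x, ∏ i, g i (x i) ∂Measure.pi μ = ∏ i, ∫⁻ y, g i y ∂μ i := by
  rw [lintegral_prod_eq_prod_lintegral_of_indepFun Finset.univ (fun i (x : ∀ i, α i) ↦ g i (x i))
    (iIndepFun_pi fun i ↦ (hg i).aemeasurable) fun i ↦ (hg i).comp (measurable_pi_apply i)]
  exact Finset.prod_congr rfl fun i _ ↦ (measurePreserving_eval μ i).lintegral_comp (hg i)

theorem pi_eq_withDensity_prod {μ ν : ∀ i, Measure (α i)} [∀ i, IsProbabilityMeasure (μ i)]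
    [∀ i, SigmaFinite (ν i)] {r : ∀ i, α i → ℝ≥0∞} (hr : ∀ i, Measurable (r i))
    (hν : ∀ i, ν i = (μ i).withDensity (r i)) :
    Measure.pi ν = (Measure.pi μ).withDensity fun x ↦ ∏ i, r i (x i) := by
  refine Measure.pi_eq fun s hs ↦ ?_
  have hbox : MeasurableSet (Set.univ.pi s) := .univ_pi hs
  calc (Measure.pi μ).withDensity (fun x ↦ ∏ i, r i (x i)) (Set.univ.pi s)
      = ∫⁻ x, ∏ i, (s i).indicator (r i) (x i) ∂Measure.pi μ := by
        simp only [withDensity_apply _ hbox, ← lintegral_indicator hbox, indicator_univ_pi_prod]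
    _ = ∏ i, ∫⁻ y, (s i).indicator (r i) y ∂μ i :=
        lintegral_pi_prod μ fun i ↦ (hr i).indicator (hs i)
    _ = ∏ i, ν i (s i) := by
        simp only [hν, withDensity_apply _ (hs _), lintegral_indicator (hs _)]

end Product

section Gaussian

theorem gaussianReal_eq_withDensity_gaussianReal (a b : ℝ) {v : ℝ≥0} (hv : v ≠ 0) :
    gaussianReal a v = (gaussianReal b v).withDensity
      fun x ↦ ENNReal.ofReal (Real.exp (((x - b) ^ 2 - (x - a) ^ 2) / (2 * v))) := by
  rw [gaussianReal_of_var_ne_zero a hv, gaussianReal_of_var_ne_zero b hv,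
    ← withDensity_mul _ (measurable_gaussianPDF b v) (by fun_prop)]
  congr 1
  ext x
  rw [Pi.mul_apply, gaussianPDF, gaussianPDF, ← ENNReal.ofReal_mul (gaussianPDFReal_nonneg _ _ _),
    gaussianPDFReal, gaussianPDFReal, mul_assoc _ (Real.exp _), ← Real.exp_add]
  ring_nf

variable {ι : Type*} [Fintype ι]

/-- The privacy loss at output `x`: the logarithm of the likelihood ratio of the Gaussian product
measure with mean `u` to the one with mean `w`, both with variance `v` in every coordinate. -/
noncomputable def gaussianPrivacyLoss (u w : ι → ℝ) (v : ℝ≥0) (x : ι → ℝ) : ℝ :=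
  ∑ i, ((x i - w i) ^ 2 - (x i - u i) ^ 2) / (2 * v)

theorem pi_gaussianReal_eq_withDensity (u w : ι → ℝ) {v : ℝ≥0} (hv : v ≠ 0) :
    (Measure.pi fun i ↦ gaussianReal (u i) v) =
      (Measure.pi fun i ↦ gaussianReal (w i) v).withDensity
        fun x ↦ ENNReal.ofReal (Real.exp (gaussianPrivacyLoss u w v x)) := by
  rw [pi_eq_withDensity_prod (fun i ↦ by fun_prop)
    fun i ↦ gaussianReal_eq_withDensity_gaussianReal (u i) (w i) hv]
  simp only [gaussianPrivacyLoss, Real.exp_sum,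
    ENNReal.ofReal_prod_of_nonneg fun _ _ ↦ (Real.exp_pos _).le]

theorem lintegral_exp_gaussianPrivacyLoss (u w : ι → ℝ) {v : ℝ≥0} (hv : v ≠ 0) :
    ∫⁻ x, ENNReal.ofReal (Real.exp (gaussianPrivacyLoss u w v x))
      ∂(Measure.pi fun i ↦ gaussianReal (w i) v) = 1 := by
  rw [← setLIntegral_univ, ← withDensity_apply _ .univ, ← pi_gaussianReal_eq_withDensity u w hv,
    measure_univ]

/-- Scaling the loss by `p` extrapolates the mean `u` to `w + p (u - w)`, up to a constant; hence
its exponential moment reduces to the total mass of another Gaussian. -/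
theorem mul_gaussianPrivacyLoss (p : ℝ) (u w : ι → ℝ) (v : ℝ≥0) (x : ι → ℝ) :
    p * gaussianPrivacyLoss u w v x =
      p * (p - 1) * (∑ i, (u i - w i) ^ 2) / (2 * v) +
        gaussianPrivacyLoss (w + p • (u - w)) w v x := by
  simp only [gaussianPrivacyLoss, Finset.mul_sum, Finset.sum_div, ← Finset.sum_add_distrib,
    Pi.add_apply, Pi.smul_apply, Pi.sub_apply, smul_eq_mul]
  exact Finset.sum_congr rfl fun i _ ↦ by ring

theorem lintegral_exp_mul_gaussianPrivacyLoss (p : ℝ) (u w : ι → ℝ) {v : ℝ≥0} (hv : v ≠ 0) :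
    ∫⁻ x, ENNReal.ofReal (Real.exp (p * gaussianPrivacyLoss u w v x))
        ∂(Measure.pi fun i ↦ gaussianReal (w i) v) =
      ENNReal.ofReal (Real.exp (p * (p - 1) * (∑ i, (u i - w i) ^ 2) / (2 * v))) := by
  simp only [mul_gaussianPrivacyLoss p, Real.exp_add, ENNReal.ofReal_mul (Real.exp_pos _).le]
  rw [lintegral_const_mul' _ _ ENNReal.ofReal_ne_top, lintegral_exp_gaussianPrivacyLoss _ _ hv,
    mul_one]

theorem pi_gaussianReal_apply_le (u w : ι → ℝ) {v : ℝ≥0} (hv : v ≠ 0) {p : ℝ} (hp : 1 ≤ p) (ε : ℝ)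
    {S : Set (ι → ℝ)} (hS : MeasurableSet S) :
    Measure.pi (fun i ↦ gaussianReal (u i) v) S ≤
      ENNReal.ofReal (Real.exp ε) * Measure.pi (fun i ↦ gaussianReal (w i) v) S +
        ENNReal.ofReal
          (Real.exp ((p - 1) * (p * (∑ i, (u i - w i) ^ 2) / (2 * v) - ε)) / p) := by
  have h := withDensity_exp_apply_le (Measure.pi fun i ↦ gaussianReal (w i) v)
    (gaussianPrivacyLoss u w v) hp ε hS
  rw [← pi_gaussianReal_eq_withDensity u w hv, lintegral_exp_mul_gaussianPrivacyLoss p u w hv,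
    ← ENNReal.ofReal_mul (by positivity), div_mul_eq_mul_div, ← Real.exp_add] at h
  convert h using 5
  ring

end Gaussian

theorem exp_neg_sq_div_two_le_div {c δ K : ℝ} (hδ : 0 < δ) (hK : 0 < K)
    (hc : √(2 * Real.log (K / δ)) < c) : Real.exp (-(c ^ 2 / 2)) ≤ δ / K := by
  have hlog : 2 * Real.log (K / δ) < c ^ 2 := Real.lt_sq_of_sqrt_lt hc
  rw [← Real.le_log_iff_exp_le (by positivity), ← inv_div K δ, Real.log_inv]
  linarith

theorem exp_half_sub_div_le {c ε δ : ℝ} (hε : 0 < ε) (hε1 : ε ≤ 1) (hδ : 0 < δ) (hδ1 : δ ≤ 1)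
    (hc : √(2 * Real.log (1.25 / δ)) < c) :
    Real.exp ((ε - c ^ 2) / 2) / (1 + c ^ 2 / ε) ≤ δ := by
  have hc_sq : 0.4 ≤ c ^ 2 := by
    have hlog : 2 * Real.log (1.25 / δ) < c ^ 2 := Real.lt_sq_of_sqrt_lt hc
    have hlog_ge : 1 - (1.25 / δ)⁻¹ ≤ Real.log (1.25 / δ) :=
      Real.one_sub_inv_le_log_of_pos (by positivity)
    rw [inv_div] at hlog_ge
    have hratio : δ / 1.25 ≤ 0.8 := by
      rw [div_le_iff₀ (by norm_num)]
      linarith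
    linarith
  have hdenom : 1.4 ≤ 1 + c ^ 2 / ε := by
    have : c ^ 2 ≤ c ^ 2 / ε := le_div_self (sq_nonneg c) hε hε1
    linarith
  have hexp_half : Real.exp (ε / 2) ≤ 1.75 := by
    have hsq : Real.exp (1 / 2) ^ 2 = Real.exp 1 := by
      rw [← Real.exp_nat_mul]
      norm_num
    calc Real.exp (ε / 2) ≤ Real.exp (1 / 2) := by gcongr
      _ ≤ 1.75 := by
        refine le_of_sq_le_sq ?_ (by norm_num)
        linarith [Real.exp_one_lt_d9]
  calc Real.exp ((ε - c ^ 2) / 2) / (1 + c ^ 2 / ε)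
      = Real.exp (ε / 2) * Real.exp (-(c ^ 2 / 2)) / (1 + c ^ 2 / ε) := by
        rw [← Real.exp_add]
        ring_nf
    _ ≤ 1.75 * (δ / 1.25) / 1.4 := by
        gcongr
        exact exp_neg_sq_div_two_le_div hδ (by norm_num) hc
    _ = δ := by ring

theorem gaussian_mechanism_dp_general {ι : Type*} [Fintype ι] {u w : ι → ℝ} {Δ ε δ σ : ℝ}
    (hΔ : 0 < Δ) (hε : 0 < ε) (hε1 : ε ≤ 1) (hδ : 0 < δ) (huw : √(∑ i, (u i - w i) ^ 2) ≤ Δ)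
    (hσ : √(2 * Real.log (1.25 / δ)) * Δ / ε < σ) {S : Set (ι → ℝ)} (hS : MeasurableSet S) :
    Measure.pi (fun i ↦ gaussianReal (u i) (σ ^ 2).toNNReal) S ≤
      ENNReal.ofReal (Real.exp ε) *
          Measure.pi (fun i ↦ gaussianReal (w i) (σ ^ 2).toNNReal) S + ENNReal.ofReal δ := by
  rcases le_total 1 δ with hδ1 | hδ1
  · exact (prob_le_one.trans (ENNReal.one_le_ofReal.2 hδ1)).trans le_add_self
  have hσ0 : 0 < σ := lt_of_le_of_lt (by positivity) hσ
  have hv : (σ ^ 2).toNNReal ≠ 0 := (Real.toNNReal_pos.2 (by positivity)).ne'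
  have hsum : ∑ i, (u i - w i) ^ 2 ≤ Δ ^ 2 := (Real.sqrt_le_left hΔ.le).1 huw
  set c := ε * σ / Δ with hc_def
  have hc : √(2 * Real.log (1.25 / δ)) < c := by
    rwa [lt_div_iff₀ hΔ, ← div_lt_iff₀' hε]
  set p := 1 + c ^ 2 / ε with hp_def
  have hp : 1 ≤ p := le_add_of_nonneg_right (by positivity)
  have hexponent : (p - 1) * (p * Δ ^ 2 / (2 * σ ^ 2) - ε) = (ε - c ^ 2) / 2 := by
    rw [hp_def, hc_def]
    field_simp
    ring
  refine (pi_gaussianReal_apply_le u w hv hp ε hS).trans ?_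
  rw [Real.coe_toNNReal _ (sq_nonneg σ)]
  gcongr
  calc Real.exp ((p - 1) * (p * (∑ i, (u i - w i) ^ 2) / (2 * σ ^ 2) - ε)) / p
      ≤ Real.exp ((p - 1) * (p * Δ ^ 2 / (2 * σ ^ 2) - ε)) / p := by
        have : 0 ≤ p - 1 := sub_nonneg.2 hp
        gcongr
    _ = Real.exp ((ε - c ^ 2) / 2) / p := by rw [hexponent]
    _ ≤ δ := exp_half_sub_div_le hε hε1 hδ hδ1 hc

/-- The Gaussian mechanism `M(D) = f(D) + (Z₁, …, Z_k)`, with the `Z_i`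
i.i.d. `N(0, σ²)` and `σ > √(2 ln(1.25/δ)) Δ₂f / ε` for `ε ∈ (0,1)`, is
`(ε, δ)`-differentially private. -/
theorem gaussian_mechanism_dp
    {D : Type*} {k : ℕ} (Neighbor : D → D → Prop)
    (f : D → (Fin k → ℝ)) (Δ₂f ε δ σ : ℝ)
    (hΔ : 0 < Δ₂f) (hε : 0 < ε) (hε1 : ε < 1) (hδ : 0 < δ)
    (hsens : ∀ d d', Neighbor d d' →
      Real.sqrt (∑ i, (f d i - f d' i) ^ 2) ≤ Δ₂f)
    (hσ : σ > Real.sqrt (2 * Real.log (1.25 / δ)) * Δ₂f / ε)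
    (M : D → Measure (Fin k → ℝ))
    (hMdef : ∀ d, M d = Measure.pi (fun i => gaussianReal (f d i) ((σ ^ 2).toNNReal))) :
    ∀ d d', Neighbor d d' → ∀ S : Set (Fin k → ℝ), MeasurableSet S →
      M d S ≤ ENNReal.ofReal (Real.exp ε) * M d' S + ENNReal.ofReal δ := by
  intro d d' hN S hS
  rw [hMdef d, hMdef d']
  exact gaussian_mechanism_dp_general hΔ hε hε1.le hδ (hsens d d' hN) hσ hS
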